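/- Let m ≥ n, let C1 ⊆ F_{q^m}^n be an MRD code, and let C2 ⊊ C1 be an arbitrary subcode. Then M_{R,i}(C1,C2) = n − dim C1 + i for all 1 ≤ i ≤ dim C1 − dim C2. -/

import Mathlib

/-!
Every subspace `V` of `F_{q^m}^n` has as a complement the space of vectors supported on some
set `S` of coordinates.

Lower bound: if `V` is Frobenius-stable, so is that complement, hence the projection of each unit
vector onto `V` is fixed by Frobenius and has coordinates in `F_q`. A vector of `V` is therefore an
`F_q`-combination of its own coordinates outside `S`, of which there are `dim V`. A nonzero vector
of `C₁ ∩ V` vanishing at `dim (C₁ ∩ V) - 1` of those has rank weight at most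
`dim V - dim (C₁ ∩ V) + 1`, which bounds the minimum rank distance.

Upper bound: let `V` be the space of vectors supported on a set of `n - dim C₁ + i` coordinates,
chosen inside a set whose coordinate space complements `C₂`. It is Frobenius-stable, it meets `C₂`
trivially, and it meets `C₁` in dimension at least `i` for dimension reasons.
-/

open scoped BigOperators

noncomputable section

variable (q : ℕ) (Fq : Type*) {Fqm : Type*} [Field Fq] [Field Fqm] [Algebra Fq Fqm]

/-- `V = V^q`: the image of `V` under the coordinatewise `q`-th power map equals `V`
(membership in the family `Γ(F_{q^m}^n)`). -/
def IsGalClosed {n : ℕ} (V : Submodule Fqm (Fin n → Fqm)) : Prop :=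
  (fun v : Fin n → Fqm => fun i => v i ^ q) '' (V : Set (Fin n → Fqm)) =
    (V : Set (Fin n → Fqm))

/-- The `i`-th relative dimension/intersection profile (RDIP) of `C1` and `C2`. -/
noncomputable def RDIP {n : ℕ} (C1 C2 : Submodule Fqm (Fin n → Fqm)) (i : ℕ) : ℕ :=
  sSup {d : ℕ | ∃ V : Submodule Fqm (Fin n → Fqm), IsGalClosed q V ∧
    Module.finrank Fqm ↥V = i ∧
    d = Module.finrank Fqm ↥(C1 ⊓ V) - Module.finrank Fqm ↥(C2 ⊓ V)}

/-- The `i`-th relative generalized rank weight (RGRW) of `C1` and `C2`. -/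
noncomputable def RGRW {n : ℕ} (C1 C2 : Submodule Fqm (Fin n → Fqm)) (i : ℕ) : ℕ :=
  sInf {d : ℕ | ∃ V : Submodule Fqm (Fin n → Fqm), IsGalClosed q V ∧
    d = Module.finrank Fqm ↥V ∧
    i ≤ Module.finrank Fqm ↥(C1 ⊓ V) - Module.finrank Fqm ↥(C2 ⊓ V)}

/-- The rank weight `d_R(x,0)` of a vector: the `F_q`-dimension of the `F_q`-span of
its coordinates. -/
noncomputable def rankWeight {ι : Type*} (x : ι → Fqm) : ℕ :=
  Module.finrank Fq ↥(Submodule.span Fq (Set.range x))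

/-- The minimum rank distance of a (nonzero) linear code. -/
noncomputable def minRankDist {ι : Type*} (C : Submodule Fqm (ι → Fqm)) : ℕ :=
  sInf {d : ℕ | ∃ x, x ∈ C ∧ x ≠ 0 ∧ d = rankWeight Fq x}

/-- The dual code with respect to the standard bilinear form `⟨x,y⟩ = ∑ i, x i * y i`. -/
def dualCode {n : ℕ} (V : Submodule Fqm (Fin n → Fqm)) : Submodule Fqm (Fin n → Fqm) where
  carrier := {x | ∀ v ∈ V, ∑ i, x i * v i = 0}
  add_mem' := by
    intro a b ha hb v hv
    have h1 := ha v hv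
    have h2 := hb v hv
    simp only [Set.mem_setOf_eq] at *
    simp only [Pi.add_apply, add_mul]
    rw [Finset.sum_add_distrib, h1, h2, add_zero]
  zero_mem' := by
    intro v hv
    simp
  smul_mem' := by
    intro c x hx v hv
    have h := hx v hv
    simp only [Set.mem_setOf_eq] at *
    simp only [Pi.smul_apply, smul_eq_mul, mul_assoc]
    rw [← Finset.mul_sum, h, mul_zero]

theorem mem_range_algebraMap_of_pow_card_eq_self [Fintype Fq] {x : Fqm}
    (hx : x ^ Fintype.card Fq = x) : x ∈ (algebraMap Fq Fqm).range := by
  have hsplits : (Polynomial.X ^ Fintype.card Fq - Polynomial.X : Polynomial Fq).Splits := by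
    rw [Polynomial.splits_iff_card_roots, FiniteField.roots_X_pow_card_sub_X,
      FiniteField.X_pow_card_sub_X_natDegree_eq Fq Fintype.one_lt_card, Finset.card_val,
      Finset.card_univ]
  exact hsplits.mem_range_of_isRoot (FiniteField.X_pow_card_sub_X_ne_zero Fq Fintype.one_lt_card)
    (by simp [hx])

theorem surjective_pow_card [Fintype Fq] [PerfectField Fqm] :
    Function.Surjective fun x : Fqm => x ^ Fintype.card Fq := by
  obtain ⟨p, _⟩ := ExpChar.exists Fqm
  have : PerfectRing Fqm p := PerfectField.toPerfectRing p
  exact (FiniteField.frobeniusAlgEquiv Fq Fqm p).surjective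

theorem projection_map_of_mapsTo {R E F : Type*} [Ring R] [AddCommGroup E] [Module R E]
    [FunLike F E E] [AddMonoidHomClass F E E] {V W : Submodule R E} (h : IsCompl V W) (σ : F)
    (hV : Set.MapsTo σ V V) (hW : Set.MapsTo σ W W) (x : E) :
    V.projection W h (σ x) = σ (V.projection W h x) := by
  have hVx : σ (V.projection W h x) ∈ V := hV (Submodule.projection_apply_mem h x)
  have hWx : σ (x - V.projection W h x) ∈ W := hW (Submodule.sub_projection_mem h x)
  calc V.projection W h (σ x)
      = V.projection W h (σ (V.projection W h x) + σ (x - V.projection W h x)) := by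
        rw [← map_add, add_sub_cancel]
    _ = σ (V.projection W h x) := by
        rw [map_add, Submodule.projection_apply_of_mem_left h hVx,
          (Submodule.projection_apply_eq_zero_iff h).2 hWx, add_zero]

theorem exists_isCompl_span_basis_image {ι K E : Type*} [DivisionRing K] [AddCommGroup E]
    [Module K E] (b : Module.Basis ι K E) (V : Submodule K E) :
    ∃ s : Set ι, IsCompl V (Submodule.span K (b '' s)) := by
  obtain ⟨s, -, -, hspan, hli⟩ :=
    exists_linearIndepOn_extension (linearIndepOn_empty K (V.mkQ ∘ b)) (Set.empty_subset Set.univ)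
  refine ⟨s, ?_, ?_⟩
  · have hdisj := Submodule.range_ker_disjoint (f := V.mkQ) (v := fun i : s => b i) hli
    rwa [Submodule.ker_mkQ, ← Set.image_eq_range, disjoint_comm] at hdisj
  · rw [codisjoint_iff, ← Submodule.map_mkQ_eq_top, Submodule.map_span, ← Set.image_comp,
      eq_top_iff]
    calc (⊤ : Submodule K (E ⧸ V)) = Submodule.span K (V.mkQ ∘ b '' Set.univ) := by
          rw [Set.image_comp, Submodule.span_image, Set.image_univ, b.span_eq, Submodule.map_top,
            Submodule.range_mkQ]
      _ ≤ Submodule.span K (V.mkQ ∘ b '' s) := Submodule.span_le.2 hspan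

theorem exists_ne_zero_forall_mem_eq_zero {ι K : Type*} [Field K]
    {D : Submodule K (ι → K)} {U : Finset ι} (h : U.card < Module.finrank K D) :
    ∃ v ∈ D, v ≠ 0 ∧ ∀ i ∈ U, v i = 0 := by
  have : Module.Finite K D := Module.finite_of_finrank_pos (Nat.zero_lt_of_lt h)
  let restrict : D →ₗ[K] U → K := LinearMap.funLeft K K ((↑) : U → ι) ∘ₗ D.subtype
  have hker : LinearMap.ker restrict ≠ ⊥ := LinearMap.ker_ne_bot_of_finrank_lt (by simpa using h)
  obtain ⟨v, hv, hv0⟩ := Submodule.exists_mem_ne_zero_of_ne_bot hker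
  exact ⟨v, v.2, by simpa using hv0, fun i hi => congrFun hv ⟨i, hi⟩⟩

section CoordSubspace

variable {ι K : Type*} [Fintype ι] [Field K]

variable (K) in
/-- The coordinate subspace of `ι → K` consisting of the vectors supported on `S`, encoded as the
span of the corresponding standard basis vectors. These serve as complements of codes and as
members of `Γ(F_{q^m}^n)`. -/
def coordSubspace (S : Finset ι) : Submodule K (ι → K) :=
  Submodule.span K (Pi.basisFun K ι '' S)

theorem mem_coordSubspace {S : Finset ι} {v : ι → K} :
    v ∈ coordSubspace K S ↔ ∀ i ∉ S, v i = 0 := by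
  rw [coordSubspace, Module.Basis.mem_span_image]
  simp [Set.subset_def, not_imp_comm]

theorem coordSubspace_mono {S T : Finset ι} (h : S ⊆ T) : coordSubspace K S ≤ coordSubspace K T :=
  Submodule.span_mono (Set.image_mono h)

theorem finrank_coordSubspace (S : Finset ι) : Module.finrank K (coordSubspace K S) = S.card := by
  have hli : LinearIndependent K fun i : S => Pi.basisFun K ι i :=
    (Pi.basisFun K ι).linearIndependent.comp _ Subtype.val_injective
  rw [coordSubspace, Set.image_eq_range]
  simpa using finrank_span_eq_card hli

theorem exists_isCompl_coordSubspace (V : Submodule K (ι → K)) :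
    ∃ S : Finset ι, IsCompl V (coordSubspace K S) := by
  obtain ⟨s, hs⟩ := exists_isCompl_span_basis_image (Pi.basisFun K ι) V
  exact ⟨s.toFinite.toFinset, by simpa [coordSubspace] using hs⟩

theorem finrank_add_card_of_isCompl_coordSubspace {V : Submodule K (ι → K)} {S : Finset ι}
    (h : IsCompl V (coordSubspace K S)) : Module.finrank K V + S.card = Fintype.card ι := by
  rw [← finrank_coordSubspace (K := K) S, Submodule.finrank_add_eq_of_isCompl h,
    Module.finrank_fintype_fun_eq_card]

theorem exists_card_eq_disjoint_coordSubspace (C : Submodule K (ι → K)) {d : ℕ}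
    (hd : Module.finrank K C + d ≤ Fintype.card ι) :
    ∃ T : Finset ι, T.card = d ∧ Disjoint C (coordSubspace K T) := by
  obtain ⟨S, hS⟩ := exists_isCompl_coordSubspace C
  have hcard := finrank_add_card_of_isCompl_coordSubspace hS
  obtain ⟨T, hTS, hT⟩ := Finset.exists_subset_card_eq (show d ≤ S.card by lia)
  exact ⟨T, hT, hS.disjoint.mono_right (coordSubspace_mono hTS)⟩

theorem map_projection_single_of_isCompl_coordSubspace [DecidableEq ι] {V : Submodule K (ι → K)}
    {S : Finset ι} (h : IsCompl V (coordSubspace K S)) (σ : K →+* K)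
    (hσ : Set.MapsTo (σ.compLeft ι) V V) (i j : ι) :
    σ (V.projection _ h (Pi.single j 1) i) = V.projection _ h (Pi.single j 1) i := by
  have hS : Set.MapsTo (σ.compLeft ι) (coordSubspace K S) (coordSubspace K S) := fun v hv =>
    mem_coordSubspace.2 fun k hk => by simp [mem_coordSubspace.1 hv k hk]
  have hsingle : σ.compLeft ι (Pi.single j 1) = Pi.single j 1 := by
    ext k
    simp [Pi.single_apply, apply_ite σ]
  have hcomm := projection_map_of_mapsTo h (σ.compLeft ι) hσ hS (Pi.single j 1)
  rw [hsingle] at hcomm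
  exact (congrFun hcomm i).symm

theorem eq_sum_compl_smul_projection_single [DecidableEq ι] {V : Submodule K (ι → K)} {S : Finset ι}
    (h : IsCompl V (coordSubspace K S)) {v : ι → K} (hv : v ∈ V) :
    v = ∑ j ∈ Sᶜ, v j • V.projection _ h (Pi.single j 1) := by
  have hzero : ∀ j ∈ S, V.projection _ h (Pi.single j 1) = 0 := fun j hj =>
    (Submodule.projection_apply_eq_zero_iff h).2 <| mem_coordSubspace.2 fun i hi =>
      Pi.single_eq_of_ne (ne_of_mem_of_not_mem hj hi).symm 1
  calc v = V.projection _ h v := (Submodule.projection_apply_of_mem_left h hv).symm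
    _ = ∑ j, v j • V.projection _ h (Pi.single j 1) := by
        conv_lhs => rw [← (Pi.basisFun K ι).sum_repr v]
        simp only [map_sum, map_smul, Pi.basisFun_repr, Pi.basisFun_apply]
    _ = ∑ j ∈ Sᶜ, v j • V.projection _ h (Pi.single j 1) :=
        (Finset.sum_subset (Finset.subset_univ _) fun j _ hj => by
          rw [hzero j (by simpa using hj), smul_zero]).symm

end CoordSubspace

section LowerBound

variable {ι : Type*} [Fintype Fq]

theorem projection_single_mem_range_algebraMap [Fintype ι] [DecidableEq ι]
    {V : Submodule Fqm (ι → Fqm)} {S : Finset ι} (hVS : IsCompl V (coordSubspace Fqm S))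
    (hV : Set.MapsTo (fun v i => v i ^ Fintype.card Fq) (V : Set (ι → Fqm)) V) (i j : ι) :
    V.projection _ hVS (Pi.single j 1) i ∈ (algebraMap Fq Fqm).range :=
  mem_range_algebraMap_of_pow_card_eq_self Fq <|
    map_projection_single_of_isCompl_coordSubspace hVS
      (FiniteField.frobeniusAlgHom Fq Fqm : Fqm →+* Fqm) hV i j

theorem span_range_le_span_image_support_compl [Fintype ι]
    {V : Submodule Fqm (ι → Fqm)} {S : Finset ι} (hVS : IsCompl V (coordSubspace Fqm S))
    (hV : Set.MapsTo (fun v i => v i ^ Fintype.card Fq) (V : Set (ι → Fqm)) V)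
    {v : ι → Fqm} (hv : v ∈ V) :
    Submodule.span Fq (Set.range v) ≤ Submodule.span Fq (v '' {j | j ∉ S ∧ v j ≠ 0}) := by
  classical
  rw [Submodule.span_le]
  rintro _ ⟨i, rfl⟩
  have hvi : v i = ∑ j ∈ Sᶜ, v j * V.projection _ hVS (Pi.single j 1) i := by
    simpa using congrFun (eq_sum_compl_smul_projection_single hVS hv) i
  rw [hvi]
  refine Submodule.sum_mem _ fun j hj => ?_
  obtain ⟨a, ha⟩ := projection_single_mem_range_algebraMap Fq hVS hV i j
  rw [← ha, mul_comm, ← Algebra.smul_def]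
  refine Submodule.smul_mem _ a ?_
  by_cases hvj : v j = 0
  · rw [hvj]
    exact Submodule.zero_mem _
  · exact Submodule.subset_span ⟨j, ⟨Finset.mem_compl.1 hj, hvj⟩, rfl⟩

theorem rankWeight_le_card_filter_compl [Fintype ι] [DecidableEq ι] [DecidableEq Fqm]
    {V : Submodule Fqm (ι → Fqm)} {S : Finset ι} (hVS : IsCompl V (coordSubspace Fqm S))
    (hV : Set.MapsTo (fun v i => v i ^ Fintype.card Fq) (V : Set (ι → Fqm)) V)
    {v : ι → Fqm} (hv : v ∈ V) : rankWeight Fq v ≤ ({j ∈ Sᶜ | v j ≠ 0} : Finset ι).card := by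
  have hspan : Submodule.span Fq (Set.range v) ≤
      Submodule.span Fq (({j ∈ Sᶜ | v j ≠ 0}.image v : Finset Fqm) : Set Fqm) := by
    simpa using span_range_le_span_image_support_compl Fq hVS hV hv
  calc rankWeight Fq v ≤ ({j ∈ Sᶜ | v j ≠ 0}.image v).card :=
        (Submodule.finrank_mono hspan).trans (finrank_span_finset_le_card _)
    _ ≤ ({j ∈ Sᶜ | v j ≠ 0} : Finset ι).card := Finset.card_image_le

theorem exists_ne_zero_rankWeight_add_finrank_le [Finite ι] {V D : Submodule Fqm (ι → Fqm)}
    (hV : Set.MapsTo (fun v i => v i ^ Fintype.card Fq) (V : Set (ι → Fqm)) V)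
    (hDV : D ≤ V) (hD : D ≠ ⊥) :
    ∃ v ∈ D, v ≠ 0 ∧ rankWeight Fq v + Module.finrank Fqm D ≤ Module.finrank Fqm V + 1 := by
  classical
  have := Fintype.ofFinite ι
  have hDpos : 0 < Module.finrank Fqm D := Submodule.one_le_finrank_iff.2 hD
  have hDle : Module.finrank Fqm D ≤ Module.finrank Fqm V := Submodule.finrank_mono hDV
  obtain ⟨S, hVS⟩ := exists_isCompl_coordSubspace V
  have hS : Sᶜ.card = Module.finrank Fqm V := by
    rw [Finset.card_compl, ← finrank_add_card_of_isCompl_coordSubspace hVS, Nat.add_sub_cancel]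
  obtain ⟨U, hUS, hU⟩ := Finset.exists_subset_card_eq
    (show Module.finrank Fqm D - 1 ≤ Sᶜ.card by lia)
  obtain ⟨v, hvD, hv0, hvU⟩ := exists_ne_zero_forall_mem_eq_zero
    (show U.card < Module.finrank Fqm D by lia)
  have hweight : rankWeight Fq v ≤ (Sᶜ \ U).card :=
    (rankWeight_le_card_filter_compl Fq hVS hV (hDV hvD)).trans <|
      Finset.card_le_card fun j => by
        simp only [Finset.mem_filter, Finset.mem_sdiff]
        exact fun ⟨hj, hvj⟩ => ⟨hj, mt (hvU j) hvj⟩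
  rw [Finset.card_sdiff_of_subset hUS] at hweight
  exact ⟨v, hvD, hv0, by lia⟩

theorem minRankDist_add_finrank_inf_le [Finite ι] {C V : Submodule Fqm (ι → Fqm)}
    (hV : Set.MapsTo (fun v i => v i ^ Fintype.card Fq) (V : Set (ι → Fqm)) V) (hCV : C ⊓ V ≠ ⊥) :
    minRankDist Fq C + Module.finrank Fqm ↥(C ⊓ V) ≤ Module.finrank Fqm V + 1 := by
  obtain ⟨v, hv, hv0, hle⟩ := exists_ne_zero_rankWeight_add_finrank_le Fq hV inf_le_right hCV
  have hdist : minRankDist Fq C ≤ rankWeight Fq v := Nat.sInf_le ⟨v, hv.1, hv0, rfl⟩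
  lia

end LowerBound

section UpperBound

variable {q} {n : ℕ}

theorem isGalClosed_coordSubspace (hsurj : Function.Surjective fun x : Fqm => x ^ q)
    (S : Finset (Fin n)) : IsGalClosed q (coordSubspace Fqm S) := by
  have hq : q ≠ 0 := by
    rintro rfl
    simpa using hsurj 0
  refine Set.Subset.antisymm ?_ fun v hv => ?_
  · rintro _ ⟨v, hv, rfl⟩
    exact mem_coordSubspace.2 fun i hi => by simp [mem_coordSubspace.1 hv i hi, hq]
  · choose root hroot using hsurj
    refine ⟨fun i => root (v i), mem_coordSubspace.2 fun i hi => ?_, funext fun i => hroot (v i)⟩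
    exact pow_eq_zero_iff hq |>.1 ((hroot _).trans (mem_coordSubspace.1 hv i hi))

theorem exists_finrank_eq_and_le_finrank_inf_sub
    (hsurj : Function.Surjective fun x : Fqm => x ^ q) (C1 C2 : Submodule Fqm (Fin n → Fqm)) {i : ℕ}
    (hi : Module.finrank Fqm C2 + i ≤ Module.finrank Fqm C1) :
    ∃ V : Submodule Fqm (Fin n → Fqm), IsGalClosed q V ∧
      n - Module.finrank Fqm C1 + i = Module.finrank Fqm V ∧
      i ≤ Module.finrank Fqm ↥(C1 ⊓ V) - Module.finrank Fqm ↥(C2 ⊓ V) := by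
  have hC1 : Module.finrank Fqm C1 ≤ n := by simpa using Submodule.finrank_le C1
  obtain ⟨T, hT, hdisj⟩ := exists_card_eq_disjoint_coordSubspace C2
    (d := n - Module.finrank Fqm C1 + i) (by rw [Fintype.card_fin]; lia)
  have hdim := (finrank_coordSubspace (K := Fqm) T).trans hT
  refine ⟨coordSubspace Fqm T, isGalClosed_coordSubspace hsurj T, hdim.symm, ?_⟩
  have hsup : Module.finrank Fqm ↥(C1 ⊔ coordSubspace Fqm T) ≤ n := by
    simpa using Submodule.finrank_le (C1 ⊔ coordSubspace Fqm T)
  have hmodular := Submodule.finrank_sup_add_finrank_inf_eq C1 (coordSubspace Fqm T)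
  rw [hdisj.eq_bot, finrank_bot]
  lia

end UpperBound

theorem stmt8_general {n : ℕ} [Fintype Fq] [PerfectField Fqm] (hq : Fintype.card Fq = q)
    (C1 C2 : Submodule Fqm (Fin n → Fqm))
    (hMRD : minRankDist Fq C1 = n - Module.finrank Fqm ↥C1 + 1) {i : ℕ} (hi : 1 ≤ i)
    (hi' : i ≤ Module.finrank Fqm ↥C1 - Module.finrank Fqm ↥C2) :
    RGRW q C1 C2 i = n - Module.finrank Fqm ↥C1 + i := by
  subst hq
  have hmem := exists_finrank_eq_and_le_finrank_inf_sub (surjective_pow_card Fq) C1 C2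
    (i := i) (by lia)
  refine le_antisymm (Nat.sInf_le hmem) (le_csInf ⟨_, hmem⟩ ?_)
  rintro _ ⟨V, hV, rfl, hiV⟩
  have hne : C1 ⊓ V ≠ ⊥ := Submodule.one_le_finrank_iff.1 (by lia)
  have hdist := minRankDist_add_finrank_inf_le Fq (Set.mapsTo_iff_image_subset.2 hV.subset) hne
  lia

/-- Let `m ≥ n`, `C1 ⊆ F_{q^m}^n` an MRD code and `C2 ⊊ C1` an arbitrary
subcode. Then `M_{R,i}(C1,C2) = n - dim C1 + i` for all `1 ≤ i ≤ dim C1 - dim C2`. -/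
theorem stmt8 (m n : ℕ) [Fintype Fq] [Fintype Fqm]
    (hq : Fintype.card Fq = q) (hm : Module.finrank Fq Fqm = m) (hmn : n ≤ m)
    (C1 C2 : Submodule Fqm (Fin n → Fqm)) (hC : C1 ≠ ⊥)
    (hMRD : minRankDist Fq C1 = n - Module.finrank Fqm ↥C1 + 1)
    (h12 : C2 < C1) :
    ∀ i, 1 ≤ i → i ≤ Module.finrank Fqm ↥C1 - Module.finrank Fqm ↥C2 →
      RGRW q C1 C2 i = n - Module.finrank Fqm ↥C1 + i := by
  intro i hi hi'
  exact stmt8_general q Fq hq C1 C2 hMRD hi hi'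

end
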